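/- arXiv:2004.05555 — 3 statements merged into one kernel-verified Lean document; each statement's English description precedes it below -/
import Mathlib

section
/- Let G be a group, l : G → ℤ a group homomorphism, and φ an automorphism of G satisfying l(φ(w)) = l(w) for all w ∈ G. Then the set H = {(φ^{l(w)}, w) : w ∈ G} is a regular subgroup of the holomorph Hol G; for each u ∈ G, the unique element (φ^{l(v)}, v) ∈ H with v·φ^{l(v)}(u) = 1 is given by v = φ^{−l(u)}(u⁻¹). -/
/-- The holomorph of a group `G`: the semidirect product `Aut(G) ⋉ G` whose
multiplication is `(f, a) * (g, b) = (f * g, a * f b)`. -/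
abbrev Hol (G : Type*) [Group G] : Type _ :=
  SemidirectProduct G (MulAut G) (MonoidHom.id (MulAut G))

/-
The map `χ w = φ ^ l w` is a homomorphism with `χ (χ a b) = χ b`, which makes its graph closed under
the product of the holomorph. Applying `χ` to the equation `v * χ v u = 1` gives `χ v = (χ u)⁻¹`,
which turns the equation into a formula for `v`. The same argument works when `χ : N →* Q` takes
values in a group `Q` acting on `N` through `ψ`, with `N ⋊[ψ] Q` in place of the holomorph.
-/

section Graph

variable {N Q : Type*} [Group N] [Group Q] {ψ : Q →* MulAut N} {χ : N →* Q}

theorem map_inv_action_apply (hχ : ∀ a b, χ (ψ (χ a) b) = χ b) (a b : N) :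
    χ (ψ (χ a)⁻¹ b) = χ b := by
  rw [← map_inv χ, hχ]

variable (χ) in
/-- The graph of a homomorphism `χ : N →* Q`, as a subgroup of the semidirect product `N ⋊[ψ] Q`,
for `χ` invariant under the action `ψ ∘ χ` of `N` on itself. For trivial `ψ` this is
`MonoidHom.graph χ`, up to the identification of `N ⋊[ψ] Q` with `N × Q`. -/
def semidirectGraph (hχ : ∀ a b, χ (ψ (χ a) b) = χ b) : Subgroup (N ⋊[ψ] Q) where
  carrier := {x | χ x.left = x.right}
  one_mem' := map_one χ
  mul_mem' {x y} (hx : χ x.left = x.right) (hy : χ y.left = y.right) := by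
    change χ (x.left * ψ x.right y.left) = x.right * y.right
    rw [map_mul, ← hx, hχ, hy]
  inv_mem' {x} (hx : χ x.left = x.right) := by
    change χ (ψ x.right⁻¹ x.left⁻¹) = x.right⁻¹
    rw [← hx, map_inv_action_apply hχ, map_inv]

theorem mem_semidirectGraph_iff_exists (hχ : ∀ a b, χ (ψ (χ a) b) = χ b) {x : N ⋊[ψ] Q} :
    x ∈ semidirectGraph χ hχ ↔ ∃ w, x = ⟨w, χ w⟩ := by
  constructor
  · intro (hx : χ x.left = x.right)
    exact ⟨x.left, SemidirectProduct.ext rfl hx.symm⟩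
  · rintro ⟨w, rfl⟩
    exact rfl

theorem mul_action_apply_eq_one_iff (hχ : ∀ a b, χ (ψ (χ a) b) = χ b) (u v : N) :
    v * ψ (χ v) u = 1 ↔ v = ψ (χ u)⁻¹ u⁻¹ := by
  constructor
  · intro h
    have hv : χ v = (χ u)⁻¹ := by
      apply eq_inv_of_mul_eq_one_left
      rw [← hχ v u, ← map_mul, h, map_one]
    rw [← hv, map_inv]
    exact eq_inv_of_mul_eq_one_left h
  · rintro rfl
    rw [map_inv_action_apply hχ, map_inv χ, ← map_mul, inv_mul_cancel, map_one]

end Graph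

theorem apply_zpow_smul_of_apply_smul {M X Y : Type*} [Group M] [MulAction M X] {f : X → Y} {m : M}
    (hf : ∀ x, f (m • x) = f x) (n : ℤ) (x : X) : f (m ^ n • x) = f x := by
  induction n generalizing x with
  | zero => rw [zpow_zero, one_smul]
  | succ n ih => rw [zpow_add_one, mul_smul, ih, hf]
  | pred n ih => rw [zpow_sub_one, mul_smul, ih, ← hf, smul_inv_smul]

/-- The homomorphism `w ↦ m ^ l w` attached to a homomorphism `l` from `G` to `ℤ`. As `G` is
multiplicative and `ℤ` additive, `l` is given as a function together with its additivity `hl`. -/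
def zpowCharacter {G M : Type*} [Group G] [Group M] (l : G → ℤ)
    (hl : ∀ u v, l (u * v) = l u + l v) (m : M) : G →* M :=
  MonoidHom.mk' (fun w => m ^ l w) fun u v => by rw [hl, zpow_add]

theorem zpowCharacter_action_apply {G : Type*} [Group G] {l : G → ℤ}
    (hl : ∀ u v, l (u * v) = l u + l v) {φ : MulAut G} (hφ : ∀ w, l (φ w) = l w) (a b : G) :
    zpowCharacter l hl φ (zpowCharacter l hl φ a b) = zpowCharacter l hl φ b :=
  congrArg (φ ^ ·) (apply_zpow_smul_of_apply_smul (m := φ) hφ (l a) b)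

theorem stmt6_general {N Q : Type*} [Group N] [Group Q] (ψ : Q →* MulAut N) (χ : N →* Q)
    (hχ : ∀ a b, χ (ψ (χ a) b) = χ b) :
    ∃ H : Subgroup (N ⋊[ψ] Q),
      (H : Set (N ⋊[ψ] Q)) = {x | ∃ w, x = ⟨w, χ w⟩} ∧
      ∀ u v, v * ψ (χ v) u = 1 ↔ v = ψ (χ u)⁻¹ u⁻¹ :=
  ⟨semidirectGraph χ hχ, Set.ext fun _ => mem_semidirectGraph_iff_exists hχ,
    mul_action_apply_eq_one_iff hχ⟩

/-- Let `G` be a group, `l : G → ℤ` a group homomorphism and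
`φ` an automorphism of `G` with `l (φ w) = l w` for all `w`.  Then
`H = {(φ^{l w}, w) | w ∈ G}` is a regular subgroup of `Hol G`; for each
`u : G` the unique `v : G` with `v * φ^{l v} u = 1` is `v = φ^{-l u} (u⁻¹)`. -/
theorem stmt6 {G : Type*} [Group G] (l : G → ℤ)
    (hl : ∀ u v : G, l (u * v) = l u + l v)
    (φ : MulAut G) (hφ : ∀ w : G, l (φ w) = l w) :
    ∃ H : Subgroup (Hol G),
      ((H : Set (Hol G)) = {x : Hol G | ∃ w : G, x = ⟨w, φ ^ l w⟩}) ∧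
      ∀ u v : G, v * (φ ^ l v) u = 1 ↔ v = (φ ^ (-(l u))) u⁻¹ := by
  simp only [zpow_neg]
  exact stmt6_general (.id _) (zpowCharacter l hl φ) (zpowCharacter_action_apply hl hφ)
end

section
/- Fix p ∈ ℤ and define an operation ∘ on ℤ × ℤ by (a₁,a₂) ∘ (b₁,b₂) = (a₁ + b₁ + p(a₁+a₂)(b₁+b₂), a₂ + b₂ − p(a₁+a₂)(b₁+b₂)). Then (ℤ², ∘) is a group with identity (0,0), and the inverse of a = (a₁,a₂) is ā = (−a₁ + p(a₁+a₂)², −a₂ − p(a₁+a₂)²); that is, a ∘ ā = ā ∘ a = (0,0). -/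
/-- The operation `∘` on `ℤ × ℤ` determined by the parameter `p`:
`(a₁,a₂) ∘ (b₁,b₂) = (a₁ + b₁ + p(a₁+a₂)(b₁+b₂), a₂ + b₂ − p(a₁+a₂)(b₁+b₂))`. -/
def circP (p : ℤ) (a b : ℤ × ℤ) : ℤ × ℤ :=
  (a.1 + b.1 + p * (a.1 + a.2) * (b.1 + b.2),
   a.2 + b.2 - p * (a.1 + a.2) * (b.1 + b.2))

/-- The inverse of `a` for the operation `circP p`:
`ā = (−a₁ + p(a₁+a₂)², −a₂ − p(a₁+a₂)²)`. -/
def cinvP (p : ℤ) (a : ℤ × ℤ) : ℤ × ℤ :=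
  (-a.1 + p * (a.1 + a.2) ^ 2, -a.2 - p * (a.1 + a.2) ^ 2)

/-!
On an additive group `A`, the operation `a ∘ b = a + γ a • b` is a group law as soon as the map `γ`,
with values in a group acting on `A`, turns `∘` into multiplication. Here `γ a` is the transvection
`x ↦ x + f x • f a • v`, where the linear form `f` kills `v`. Transvections preserve `f`, so
`f (a ∘ b) = f a + f b`, and transvections along multiples of `v` compose by adding their vectors.
On `ℤ × ℤ`, take `f (x₁, x₂) = x₁ + x₂` and `v = (p, -p)`; then `γ a` is `φ ^ f a`, where
`φ x = x + f x • v`.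
-/

section GammaFunction

variable {G A : Type*} [Group G] [AddGroup A] [DistribMulAction G A]

/-- The operation `a ∘ b = a + γ a • b` on an additive group `A` twisted by a map `γ` into a group
acting on `A`. When `IsGammaFunction γ` holds it is the circle operation of a skew brace. -/
def braceMul (γ : A → G) (a b : A) : A :=
  a + γ a • b

/-- The candidate inverse of `a` for `braceMul γ`, obtained by solving `a + γ a • x = 0`. -/
def braceInv (γ : A → G) (a : A) : A :=
  -((γ a)⁻¹ • a)

/-- A gamma function: a map carrying the operation `braceMul γ` that it defines to the
multiplication of `G`. -/
def IsGammaFunction (γ : A → G) : Prop :=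
  ∀ a b, γ (braceMul γ a b) = γ a * γ b

@[simp]
theorem braceMul_zero (γ : A → G) (a : A) : braceMul γ a 0 = a := by
  rw [braceMul, smul_zero, add_zero]

@[simp]
theorem braceMul_braceInv (γ : A → G) (a : A) : braceMul γ a (braceInv γ a) = 0 := by
  rw [braceMul, braceInv, smul_neg, smul_inv_smul, add_neg_cancel]

namespace IsGammaFunction

variable {γ : A → G}

theorem braceMul_assoc (hγ : IsGammaFunction γ) (a b c : A) :
    braceMul γ (braceMul γ a b) c = braceMul γ a (braceMul γ b c) :=
  calc
    braceMul γ a b + γ (braceMul γ a b) • c = a + γ a • b + (γ a * γ b) • c := by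
      rw [hγ, braceMul]
    _ = a + γ a • (b + γ b • c) := by
      rw [mul_smul, smul_add, add_assoc]

theorem map_zero (hγ : IsGammaFunction γ) : γ 0 = 1 := by
  have h : γ 0 * γ 0 = γ 0 := by rw [← hγ, braceMul_zero]
  exact mul_eq_left.mp h

theorem zero_braceMul (hγ : IsGammaFunction γ) (a : A) : braceMul γ 0 a = a := by
  rw [braceMul, hγ.map_zero, one_smul, zero_add]

theorem map_braceInv (hγ : IsGammaFunction γ) (a : A) : γ (braceInv γ a) = (γ a)⁻¹ := by
  have h : γ a * γ (braceInv γ a) = 1 := by rw [← hγ, braceMul_braceInv, hγ.map_zero]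
  exact eq_inv_of_mul_eq_one_right h

theorem braceInv_braceMul (hγ : IsGammaFunction γ) (a : A) : braceMul γ (braceInv γ a) a = 0 := by
  rw [braceMul, hγ.map_braceInv, braceInv, neg_add_cancel]

end IsGammaFunction

end GammaFunction

section Transvection

variable {R V : Type*} [Ring R] [AddCommGroup V] [Module R V] (f : Module.Dual R V) (v : V)

/-- The operation `a ∘ b = a + b + f b • f a • v` attached to a linear form `f` and a vector `v`.
The scalars act in this order because `R` need not be commutative. -/
def transvectionMul (a b : V) : V :=
  a + b + f b • f a • v

/-- The inverse of `a` for `transvectionMul f v` when `f v = 0`. -/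
def transvectionInv (a : V) : V :=
  -a + f a • f a • v

variable {f v}

theorem map_smul_eq_zero_of_map_eq_zero (hfv : f v = 0) (r : R) : f (r • v) = 0 := by
  rw [map_smul, hfv, smul_zero]

/-- The map sending `a` to the transvection `x ↦ x + f x • f a • v`; it is the gamma function of
`transvectionMul f v`. -/
def transvectionGamma (hfv : f v = 0) (a : V) : V ≃ₗ[R] V :=
  LinearEquiv.transvection (map_smul_eq_zero_of_map_eq_zero hfv (f a))

theorem transvectionGamma_apply (hfv : f v = 0) (a b : V) :
    transvectionGamma hfv a b = b + f b • f a • v :=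
  LinearEquiv.transvection.apply _ b

theorem map_transvectionGamma (hfv : f v = 0) (a b : V) : f (transvectionGamma hfv a b) = f b := by
  rw [transvectionGamma_apply, map_add, map_smul, map_smul_eq_zero_of_map_eq_zero hfv, smul_zero,
    add_zero]

theorem braceMul_transvectionGamma (hfv : f v = 0) (a b : V) :
    braceMul (transvectionGamma hfv) a b = transvectionMul f v a b := by
  rw [braceMul, LinearEquiv.smul_def, transvectionGamma_apply, transvectionMul, add_assoc]

theorem isGammaFunction_transvectionGamma (hfv : f v = 0) :
    IsGammaFunction (transvectionGamma hfv) := by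
  intro a b
  have map_braceMul : f (braceMul (transvectionGamma hfv) a b) = f a + f b := by
    rw [braceMul, LinearEquiv.smul_def, map_add, map_transvectionGamma]
  ext x
  calc
    transvectionGamma hfv (braceMul (transvectionGamma hfv) a b) x
      = x + f x • (f a + f b) • v := by
        rw [transvectionGamma_apply, map_braceMul]
    _ = x + f x • f b • v + f x • f a • v := by
        rw [add_smul, smul_add, add_comm (f x • f a • v), add_assoc]
    _ = transvectionGamma hfv a (transvectionGamma hfv b x) := by
        rw [transvectionGamma_apply hfv a, map_transvectionGamma, transvectionGamma_apply]

theorem braceInv_transvectionGamma (hfv : f v = 0) (a : V) :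
    braceInv (transvectionGamma hfv) a = transvectionInv f v a := by
  have hf : f (transvectionInv f v a) = -f a := by
    rw [transvectionInv, map_add, map_neg, map_smul, map_smul_eq_zero_of_map_eq_zero hfv,
      smul_zero, add_zero]
  have h : transvectionGamma hfv a • transvectionInv f v a = -a := by
    rw [LinearEquiv.smul_def, transvectionGamma_apply, hf, transvectionInv, neg_smul,
      add_neg_cancel_right]
  rw [braceInv, ← smul_neg, ← h, inv_smul_smul]

theorem stmt12_general (hfv : f v = 0) :
    (∀ a b c : V, transvectionMul f v (transvectionMul f v a b) c =
      transvectionMul f v a (transvectionMul f v b c)) ∧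
    (∀ a : V, transvectionMul f v 0 a = a) ∧
    (∀ a : V, transvectionMul f v a 0 = a) ∧
    (∀ a : V, transvectionMul f v a (transvectionInv f v a) = 0 ∧
      transvectionMul f v (transvectionInv f v a) a = 0) := by
  have hγ := isGammaFunction_transvectionGamma hfv
  simp only [← braceMul_transvectionGamma hfv, ← braceInv_transvectionGamma hfv]
  exact ⟨hγ.braceMul_assoc, hγ.zero_braceMul, braceMul_zero _,
    fun a => ⟨braceMul_braceInv _ a, hγ.braceInv_braceMul a⟩⟩

end Transvection

/-- The linear form `(x₁, x₂) ↦ x₁ + x₂` on `ℤ × ℤ`, called `l` in the description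
`a ∘ b = a + φ ^ l a (b)` of the brace. -/
def coordSum : Module.Dual ℤ (ℤ × ℤ) :=
  LinearMap.fst ℤ ℤ ℤ + LinearMap.snd ℤ ℤ ℤ

theorem coordSum_apply (a : ℤ × ℤ) : coordSum a = a.1 + a.2 :=
  rfl

theorem coordSum_self_neg (p : ℤ) : coordSum (p, -p) = 0 :=
  add_neg_cancel p

theorem circP_eq_transvectionMul (p : ℤ) : circP p = transvectionMul coordSum (p, -p) := by
  ext a b <;>
    simp only [circP, transvectionMul, coordSum_apply, Prod.fst_add, Prod.snd_add, Prod.smul_fst,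
      Prod.smul_snd, smul_eq_mul] <;>
    ring

theorem cinvP_eq_transvectionInv (p : ℤ) : cinvP p = transvectionInv coordSum (p, -p) := by
  ext a <;>
    simp only [cinvP, transvectionInv, coordSum_apply, Prod.fst_add, Prod.snd_add, Prod.fst_neg,
      Prod.snd_neg, Prod.smul_fst, Prod.smul_snd, smul_eq_mul] <;>
    ring

/-- For each `p : ℤ`, `(ℤ², ∘)` is a group with identity
`(0, 0)`, and the inverse of `a = (a₁, a₂)` is
`ā = (−a₁ + p(a₁+a₂)², −a₂ − p(a₁+a₂)²)`, i.e. `a ∘ ā = ā ∘ a = (0, 0)`. -/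
theorem stmt12 (p : ℤ) :
    (∀ a b c : ℤ × ℤ, circP p (circP p a b) c = circP p a (circP p b c)) ∧
    (∀ a : ℤ × ℤ, circP p ((0 : ℤ), (0 : ℤ)) a = a) ∧
    (∀ a : ℤ × ℤ, circP p a ((0 : ℤ), (0 : ℤ)) = a) ∧
    (∀ a : ℤ × ℤ, circP p a (cinvP p a) = ((0 : ℤ), (0 : ℤ)) ∧
      circP p (cinvP p a) a = ((0 : ℤ), (0 : ℤ))) := by
  rw [circP_eq_transvectionMul, cinvP_eq_transvectionInv]
  exact stmt12_general (coordSum_self_neg p)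
end

section
/- Every λ-cyclic skew left brace is symmetric: if (G, ·, ∘) is a skew left brace such that the map λ : G → Aut(G,·), λ_a(b) = a⁻¹·(a∘b), is a group homomorphism from (G,·) whose image is a cyclic subgroup of Aut(G,·), then (G, ∘, ·) is also a skew left brace. -/
/-- A skew left brace structure on a group `(G, ·)`: a second group operation
`circ` (with inverse `cinv`, and necessarily with the same identity element `1`)
satisfying the skew brace compatibility law
`a ∘ (b * c) = (a ∘ b) * a⁻¹ * (a ∘ c)`. -/
structure SkewBrace (G : Type*) [Group G] where
  circ : G → G → G
  cinv : G → G
  circ_assoc : ∀ a b c : G, circ (circ a b) c = circ a (circ b c)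
  one_circ : ∀ a : G, circ 1 a = a
  circ_one : ∀ a : G, circ a 1 = a
  cinv_circ : ∀ a : G, circ (cinv a) a = 1
  circ_cinv : ∀ a : G, circ a (cinv a) = 1
  compat : ∀ a b c : G, circ a (b * c) = circ a b * a⁻¹ * circ a c

/-!
Writing `ā` for `cinv a`, the product `((a * b) ∘ ā) ∘ (a * c)` always equals
`a * b * (λ_{a * b} λ_a⁻¹) c`, while `a * (b ∘ c) = a * b * λ_b c`. Hence the brace is symmetric
exactly when `λ` is an antihomomorphism on `(G, ·)`, which is automatic for a homomorphism with
abelian image.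
-/

namespace SkewBrace

variable {G : Type*} [Group G] (B : SkewBrace G)

/-- The map `λ` of a skew brace, sending `a` to the automorphism `b ↦ a⁻¹ * (a ∘ b)` of `(G, ·)`.
It is a plain function, since both `·` and `∘` are relevant group structures on its domain. -/
def lam (a : G) : MulAut G where
  toFun b := a⁻¹ * B.circ a b
  invFun b := B.circ (B.cinv a) (a * b)
  left_inv b := by
    dsimp only
    rw [mul_inv_cancel_left, ← B.circ_assoc, B.cinv_circ, B.one_circ]
  right_inv b := by
    dsimp only
    rw [← B.circ_assoc, B.circ_cinv, B.one_circ, inv_mul_cancel_left]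
  map_mul' b c := by simp only [B.compat, mul_assoc]

/-- A skew brace is symmetric if its two operations may be interchanged: `(G, ∘, ·)` satisfies the
compatibility law of a skew brace, in which the inverse of `a` is now its `∘`-inverse `cinv a`. -/
def IsSymmetric : Prop :=
  ∀ a b c : G, a * B.circ b c = B.circ (B.circ (a * b) (B.cinv a)) (a * c)

theorem lam_apply (a b : G) : B.lam a b = a⁻¹ * B.circ a b := rfl

theorem circ_eq_mul_lam (a b : G) : B.circ a b = a * B.lam a b := by
  rw [lam_apply, mul_inv_cancel_left]

theorem lam_one : B.lam 1 = 1 := by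
  ext b
  rw [lam_apply, B.one_circ, inv_one, one_mul, MulAut.one_apply]

theorem lam_circ (a b : G) : B.lam (B.circ a b) = B.lam a * B.lam b := by
  ext c
  apply mul_left_cancel (a := B.circ a b)
  calc B.circ a b * B.lam (B.circ a b) c
      = B.circ a (B.circ b c) := by rw [← circ_eq_mul_lam, B.circ_assoc]
    _ = a * B.lam a (b * B.lam b c) := by rw [circ_eq_mul_lam B a, circ_eq_mul_lam B b]
    _ = B.circ a b * (B.lam a * B.lam b) c := by
      rw [map_mul, ← mul_assoc, ← circ_eq_mul_lam, MulAut.mul_apply]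

theorem lam_cinv (a : G) : B.lam (B.cinv a) = (B.lam a)⁻¹ :=
  eq_inv_of_mul_eq_one_left (by rw [← lam_circ, B.cinv_circ, lam_one])

theorem cinv_eq_lam_inv_apply (a : G) : B.cinv a = (B.lam a)⁻¹ a⁻¹ := by
  rw [MulAut.inv_apply, MulEquiv.eq_symm_apply, lam_apply, B.circ_cinv, mul_one]

theorem circ_mul_cinv_circ_mul (a b c : G) :
    B.circ (B.circ (a * b) (B.cinv a)) (a * c) =
      a * b * (B.lam (a * b) * (B.lam a)⁻¹) c := by
  set ψ := B.lam (a * b) * (B.lam a)⁻¹ with hψ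
  have lam_eq : B.lam (B.circ (a * b) (B.cinv a)) = ψ := by rw [lam_circ, lam_cinv]
  have circ_eq : B.circ (a * b) (B.cinv a) = a * b * ψ a⁻¹ := by
    rw [circ_eq_mul_lam, cinv_eq_lam_inv_apply, hψ, MulAut.mul_apply]
  calc B.circ (B.circ (a * b) (B.cinv a)) (a * c)
      = a * b * ψ a⁻¹ * ψ (a * c) := by rw [circ_eq_mul_lam, lam_eq, circ_eq]
    _ = a * b * ψ c := by rw [mul_assoc, ← map_mul, inv_mul_cancel_left]

theorem isSymmetric_iff_lam_mul_rev :
    B.IsSymmetric ↔ ∀ a b : G, B.lam (a * b) = B.lam b * B.lam a := by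
  refine forall₂_congr fun a b => ?_
  calc (∀ c, a * B.circ b c = B.circ (B.circ (a * b) (B.cinv a)) (a * c))
      ↔ ∀ c, B.lam b c = (B.lam (a * b) * (B.lam a)⁻¹) c := by
        simp only [circ_mul_cinv_circ_mul, circ_eq_mul_lam B b, ← mul_assoc, mul_right_inj]
    _ ↔ B.lam b = B.lam (a * b) * (B.lam a)⁻¹ := MulEquiv.ext_iff.symm
    _ ↔ B.lam (a * b) = B.lam b * B.lam a := eq_mul_inv_iff_mul_eq.trans eq_comm

end SkewBrace

theorem stmt17_general {G : Type*} [Group G] (B : SkewBrace G)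
    (lam_hom : ∀ a b : G, B.lam (a * b) = B.lam a * B.lam b)
    (lam_comm : ∀ a b : G, Commute (B.lam a) (B.lam b)) :
    B.IsSymmetric :=
  B.isSymmetric_iff_lam_mul_rev.mpr fun a b => (lam_hom a b).trans (lam_comm a b)

/-- Every λ-cyclic skew left brace is symmetric: if
`(G, ·, ∘)` is a skew left brace such that `λ_a (b) = a⁻¹ * (a ∘ b)` is
multiplicative in `a` with respect to `·` and every `λ_a` is a power of a
single automorphism `φ` of `(G, ·)` (the image of `λ` is cyclic), then
`(G, ∘, ·)` is also a skew left brace, i.e.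
`a * (b ∘ c) = ((a * b) ∘ ā) ∘ (a * c)` for all `a b c : G`. -/
theorem stmt17 {G : Type*} [Group G] (B : SkewBrace G)
    (lam_hom : ∀ a b c : G,
      (a * b)⁻¹ * B.circ (a * b) c = a⁻¹ * B.circ a (b⁻¹ * B.circ b c))
    (lam_cyclic : ∃ φ : MulAut G, ∀ a : G, ∃ k : ℤ,
      ∀ b : G, a⁻¹ * B.circ a b = (φ ^ k) b) :
    ∀ a b c : G,
      a * B.circ b c = B.circ (B.circ (a * b) (B.cinv a)) (a * c) := by
  obtain ⟨φ, hφ⟩ := lam_cyclic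
  have lam_mem (a : G) : B.lam a ∈ Subgroup.zpowers φ :=
    (hφ a).imp fun _ hk => (MulEquiv.ext hk).symm
  exact stmt17_general B (fun a b => MulEquiv.ext (lam_hom a b))
    fun a b => setLike_mul_comm (lam_mem a) (lam_mem b)
end
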